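/- Σ over integers l, m, n ≥ 1 with l ≡ n (mod 2) of 1 / (l² m³ n³ (l+m)³ (m+n)³ (l+m+n)³) = (17π⁸/688128)·ζ(9) + (150461π⁶/10321920)·ζ(11) + (2365283π⁴/491520)·ζ(13) − (32112653π²/196608)·ζ(15) + (36995525/32768)·ζ(17). -/

import Mathlib

open Complex Real

/-!
In the coordinates `l = a + b`, `m = k - a`, `n = a - b` the parity condition disappears and the
summand becomes `(a + b) P(a, b, k)`, summed over `|b| < a < k`, where `P` is the inverse cube of
the Vandermonde product of `a²`, `b²`, `k²`. Since `P` is even in each variable and alternating,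
averaging over the Weyl group of type `B₃` identifies four times this sum with the sum of
`(a - b) P` over the half space `a + b > 0`. There `k`, and then `b` for fixed `l = a + b`, range
over all integers, so partial fractions evaluate both sums in closed form. The result is a
combination of `π ^ (17 - j) / l ^ j` for odd `j` from `9` to `17`, with coefficients that depend
on the parity of `l`; summing over `l` gives zeta values.
-/

namespace SO6

open Filter Topology

/-! ### Inverse powers of integers -/

theorem tsum_eq_zero_of_comp_eq_neg {ι : Type*} {f : ι → ℝ} (e : ι ≃ ι)
    (h : ∀ x, f (e x) = -f x) : ∑' x, f x = 0 := by
  have hneg : ∑' x, f x = -∑' x, f x := by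
    rw [← tsum_neg, ← e.tsum_eq f]
    exact tsum_congr h
  linarith

/-- The sum of `k⁻ʲ` over the nonzero integers `k`; the term `k = 0` is `0⁻¹ = 0`. -/
noncomputable def intZeta (j : ℕ) : ℝ := ∑' k : ℤ, ((k : ℝ) ^ j)⁻¹

theorem hasSum_intZeta {j : ℕ} (hj : 1 < j) :
    HasSum (fun k : ℤ => ((k : ℝ) ^ j)⁻¹) (intZeta j) := by
  simpa only [one_div] using! (Real.summable_one_div_int_pow.mpr hj).hasSum

theorem intZeta_of_odd {j : ℕ} (hj : Odd j) : intZeta j = 0 :=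
  tsum_eq_zero_of_comp_eq_neg (Equiv.neg ℤ) fun k => by simp [hj.neg_pow, inv_neg]

theorem intZeta_two_mul {k : ℕ} (hk : k ≠ 0) :
    intZeta (2 * k) = 2 * ((-1) ^ (k + 1) * 2 ^ (2 * k - 1) * π ^ (2 * k) *
      bernoulli (2 * k) / (2 * k).factorial) := by
  have h := hasSum_zeta_nat hk
  simp only [one_div] at h
  rw [two_mul (_ / _)]
  refine (HasSum.of_nat_of_neg_add_one (by exact_mod_cast h) ?_).tsum_eq
  have htail := (hasSum_nat_add_iff' 1).mpr h
  simp only [Finset.sum_range_one, Nat.cast_zero, ne_eq, mul_eq_zero, OfNat.ofNat_ne_zero, hk,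
    or_self, not_false_eq_true, zero_pow, inv_zero, sub_zero] at htail
  refine htail.congr_fun fun n => ?_
  push_cast
  rw [(even_two_mul k).neg_pow]

theorem bernoulli'_six : bernoulli' 6 = 1 / 42 := by
  have h5 : bernoulli' 5 = 0 := bernoulli'_eq_zero_of_odd (by decide) (by norm_num)
  rw [bernoulli'_def]
  norm_num [Finset.sum_range_succ, Nat.choose, h5]

theorem bernoulli'_eight : bernoulli' 8 = -1 / 30 := by
  have h5 : bernoulli' 5 = 0 := bernoulli'_eq_zero_of_odd (by decide) (by norm_num)
  have h7 : bernoulli' 7 = 0 := bernoulli'_eq_zero_of_odd (by decide) (by norm_num)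
  rw [bernoulli'_def]
  norm_num [Finset.sum_range_succ, Nat.choose, h5, bernoulli'_six, h7]

theorem intZeta_two : intZeta 2 = π ^ 2 / 3 := by
  refine (intZeta_two_mul one_ne_zero).trans ?_
  norm_num [Nat.factorial, bernoulli_two]
  ring

theorem intZeta_four : intZeta 4 = π ^ 4 / 45 := by
  rw [intZeta_two_mul two_ne_zero, bernoulli_eq_bernoulli'_of_ne_one (by decide), bernoulli'_four]
  norm_num [Nat.factorial]
  ring

theorem intZeta_six : intZeta 6 = 2 * π ^ 6 / 945 := by
  rw [intZeta_two_mul three_ne_zero, bernoulli_eq_bernoulli'_of_ne_one (by decide), bernoulli'_six]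
  norm_num [Nat.factorial]
  ring

theorem intZeta_eight : intZeta 8 = π ^ 8 / 4725 := by
  rw [intZeta_two_mul four_ne_zero, bernoulli_eq_bernoulli'_of_ne_one (by decide),
    bernoulli'_eight]
  norm_num [Nat.factorial]
  ring

theorem hasSum_int_sub_succ_of_tendsto {E : Type*} [AddCommGroup E] [TopologicalSpace E]
    [IsTopologicalAddGroup E] [T2Space E] {f : ℤ → E} {a b : E}
    (hf : Summable fun k => f k - f (k + 1)) (hbot : Tendsto f atBot (𝓝 a))
    (htop : Tendsto f atTop (𝓝 b)) : HasSum (fun k => f k - f (k + 1)) (a - b) := by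
  have hlim : Tendsto (fun n : ℕ => ∑ k ∈ Finset.Ico (-n : ℤ) n, (f k - f (k + 1))) atTop
      (𝓝 (a - b)) := by
    simp only [Finset.sum_Ico_int_sub]
    exact (hbot.comp (tendsto_neg_atTop_atBot.comp tendsto_natCast_atTop_atTop)).sub
      (htop.comp tendsto_natCast_atTop_atTop)
  have hsum := SummationFilter.hasSum_symmetricIco_int_iff.mp
    (hf.hasSum.mono_left SummationFilter.LeAtTop.le_atTop)
  rw [← tendsto_nhds_unique hsum hlim]
  exact hf.hasSum

theorem summable_int_inv_sub_inv_succ :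
    Summable fun k : ℤ => (k : ℝ)⁻¹ - ((k + 1 : ℤ) : ℝ)⁻¹ := by
  have hsq := (hasSum_intZeta one_lt_two).summable
  refine .of_norm_bounded (hsq.add ((Equiv.addRight (1 : ℤ)).summable_iff.mpr hsq)) fun k => ?_
  simp only [Function.comp_apply, Equiv.coe_addRight, Real.norm_eq_abs, ← inv_pow]
  rcases eq_or_ne k 0 with rfl | h0
  · simp
  rcases eq_or_ne k (-1) with rfl | h1
  · simp
  have h0' : (k : ℝ) ≠ 0 := by exact_mod_cast h0
  have h1' : ((k + 1 : ℤ) : ℝ) ≠ 0 := by exact_mod_cast (by omega : k + 1 ≠ 0)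
  have hprod : (k : ℝ)⁻¹ - ((k + 1 : ℤ) : ℝ)⁻¹ = (k : ℝ)⁻¹ * ((k + 1 : ℤ) : ℝ)⁻¹ := by
    rw [inv_sub_inv h0' h1', ← mul_inv, div_eq_mul_inv]
    push_cast
    ring
  rw [hprod, abs_le]
  constructor <;>
    nlinarith [sq_nonneg ((k : ℝ)⁻¹ + ((k + 1 : ℤ) : ℝ)⁻¹),
      sq_nonneg ((k : ℝ)⁻¹ - ((k + 1 : ℤ) : ℝ)⁻¹)]

theorem hasSum_int_inv_sub_inv_succ :
    HasSum (fun k : ℤ => (k : ℝ)⁻¹ - ((k + 1 : ℤ) : ℝ)⁻¹) 0 := by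
  rw [← sub_self (0 : ℝ)]
  exact hasSum_int_sub_succ_of_tendsto (f := fun k : ℤ => (k : ℝ)⁻¹)
    summable_int_inv_sub_inv_succ
    (tendsto_inv_atBot_zero.comp (tendsto_intCast_atBot_iff.mpr tendsto_id))
    (tendsto_inv_atTop_zero.comp (tendsto_intCast_atTop_iff.mpr tendsto_id))

theorem hasSum_int_inv_sub_inv (p q : ℤ) :
    HasSum (fun k : ℤ => ((k - p : ℤ) : ℝ)⁻¹ - ((k - q : ℤ) : ℝ)⁻¹) 0 := by
  have hstep (r : ℤ) :
      HasSum (fun k : ℤ => ((k - (r + 1) : ℤ) : ℝ)⁻¹ - ((k - r : ℤ) : ℝ)⁻¹) 0 :=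
    ((Equiv.subRight (r + 1)).hasSum_iff.mpr hasSum_int_inv_sub_inv_succ).congr_fun fun k => by
      simp only [Function.comp_apply, Equiv.subRight_apply]
      congr 4
      ring
  have hzero (r : ℤ) : HasSum (fun k : ℤ => ((k - r : ℤ) : ℝ)⁻¹ - (k : ℝ)⁻¹) 0 := by
    induction r using Int.induction_on with
    | zero => simp
    | succ r ih => simpa using (hstep r).add ih
    | pred r ih => simpa using ih.sub (hstep (-r - 1))
  simpa using (hzero p).sub (hzero q)

/-! ### Partial fractions -/

/-- The Kronecker delta `δ_{x,0}`. It corrects partial fraction expansions at the poles, where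
the convention `0⁻¹ = 0` applies. -/
noncomputable def delta (x : ℝ) : ℝ := if x = 0 then 1 else 0

theorem delta_zero : delta 0 = 1 := if_pos rfl

theorem delta_of_ne {x : ℝ} (hx : x ≠ 0) : delta x = 0 := if_neg hx

theorem hasSum_delta {ι : Type*} {x : ι → ℝ} {i : ι} (hx : ∀ j, x j = 0 ↔ j = i) :
    HasSum (fun j => delta (x j)) 1 := by
  have h := hasSum_single (f := fun j => delta (x j)) i fun j hj => delta_of_ne (mt (hx j).mp hj)
  rwa [(hx i).mpr rfl, delta_zero] at h

section PartialFractions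

variable {x y d : ℝ}

theorem inv_mul_eq (hd : d ≠ 0) (h : y - x = d) :
    (x * y)⁻¹ = d⁻¹ * (x⁻¹ - y⁻¹) + (d ^ 2)⁻¹ * (delta x + delta y) := by
  obtain rfl : y = x + d := by linarith
  rcases eq_or_ne x 0 with rfl | hx
  · rw [zero_add, delta_zero, delta_of_ne hd]
    ring
  rcases eq_or_ne (x + d) 0 with hy | hy
  · obtain rfl : d = -x := by linarith
    rw [add_neg_cancel, delta_zero, delta_of_ne hx]
    ring
  rw [delta_of_ne hx, delta_of_ne hy]
  field_simp
  ring

theorem inv_mul_sq_eq (hd : d ≠ 0) (h : y - x = d) :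
    ((x * y) ^ 2)⁻¹ = (d ^ 2)⁻¹ * ((x ^ 2)⁻¹ + (y ^ 2)⁻¹) - 2 * (d ^ 3)⁻¹ * (x⁻¹ - y⁻¹)
      - 3 * (d ^ 4)⁻¹ * (delta x + delta y) := by
  obtain rfl : y = x + d := by linarith
  rcases eq_or_ne x 0 with rfl | hx
  · rw [zero_add, delta_zero, delta_of_ne hd]
    ring
  rcases eq_or_ne (x + d) 0 with hy | hy
  · obtain rfl : d = -x := by linarith
    rw [add_neg_cancel, delta_zero, delta_of_ne hx]
    ring
  rw [delta_of_ne hx, delta_of_ne hy]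
  field_simp
  ring

theorem inv_mul_cube_eq (hd : d ≠ 0) (h : y - x = d) :
    ((x * y) ^ 3)⁻¹ = (d ^ 3)⁻¹ * ((x ^ 3)⁻¹ - (y ^ 3)⁻¹)
      - 3 * (d ^ 4)⁻¹ * ((x ^ 2)⁻¹ + (y ^ 2)⁻¹) + 6 * (d ^ 5)⁻¹ * (x⁻¹ - y⁻¹)
      + 10 * (d ^ 6)⁻¹ * (delta x + delta y) := by
  obtain rfl : y = x + d := by linarith
  rcases eq_or_ne x 0 with rfl | hx
  · rw [zero_add, delta_zero, delta_of_ne hd]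
    ring
  rcases eq_or_ne (x + d) 0 with hy | hy
  · obtain rfl : d = -x := by linarith
    rw [add_neg_cancel, delta_zero, delta_of_ne hx]
    ring
  rw [delta_of_ne hx, delta_of_ne hy]
  field_simp
  ring

end PartialFractions

section PartialFractionSums

variable {ι : Type*} {x y : ι → ℝ} {d s₀ s₁ s₂ s₃ : ℝ}

theorem hasSum_inv_mul (hd : d ≠ 0) (h : ∀ i, y i - x i = d)
    (h₀ : HasSum (fun i => delta (x i) + delta (y i)) s₀)
    (h₁ : HasSum (fun i => (x i)⁻¹ - (y i)⁻¹) s₁) :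
    HasSum (fun i => (x i * y i)⁻¹) (d⁻¹ * s₁ + (d ^ 2)⁻¹ * s₀) :=
  ((h₁.mul_left _).add (h₀.mul_left _)).congr_fun fun i => inv_mul_eq hd (h i)

theorem hasSum_inv_mul_sq (hd : d ≠ 0) (h : ∀ i, y i - x i = d)
    (h₀ : HasSum (fun i => delta (x i) + delta (y i)) s₀)
    (h₁ : HasSum (fun i => (x i)⁻¹ - (y i)⁻¹) s₁)
    (h₂ : HasSum (fun i => (x i ^ 2)⁻¹ + (y i ^ 2)⁻¹) s₂) :
    HasSum (fun i => ((x i * y i) ^ 2)⁻¹)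
      ((d ^ 2)⁻¹ * s₂ - 2 * (d ^ 3)⁻¹ * s₁ - 3 * (d ^ 4)⁻¹ * s₀) :=
  (((h₂.mul_left _).sub (h₁.mul_left _)).sub (h₀.mul_left _)).congr_fun fun i =>
    inv_mul_sq_eq hd (h i)

theorem hasSum_inv_mul_cube (hd : d ≠ 0) (h : ∀ i, y i - x i = d)
    (h₀ : HasSum (fun i => delta (x i) + delta (y i)) s₀)
    (h₁ : HasSum (fun i => (x i)⁻¹ - (y i)⁻¹) s₁)
    (h₂ : HasSum (fun i => (x i ^ 2)⁻¹ + (y i ^ 2)⁻¹) s₂)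
    (h₃ : HasSum (fun i => (x i ^ 3)⁻¹ - (y i ^ 3)⁻¹) s₃) :
    HasSum (fun i => ((x i * y i) ^ 3)⁻¹)
      ((d ^ 3)⁻¹ * s₃ - 3 * (d ^ 4)⁻¹ * s₂ + 6 * (d ^ 5)⁻¹ * s₁ + 10 * (d ^ 6)⁻¹ * s₀) :=
  ((((h₃.mul_left _).sub (h₂.mul_left _)).add (h₁.mul_left _)).add (h₀.mul_left _)).congr_fun
    fun i => inv_mul_cube_eq hd (h i)

end PartialFractionSums

theorem hasSum_int_sub_pow_inv {j : ℕ} (hj : 1 < j) (a : ℤ) :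
    HasSum (fun k : ℤ => (((k : ℝ) - a) ^ j)⁻¹) (intZeta j) :=
  ((Equiv.subRight a).hasSum_iff.mpr (hasSum_intZeta hj)).congr_fun fun k => by
    simp only [Function.comp_apply, Equiv.subRight_apply, Int.cast_sub]

theorem hasSum_int_add_pow_inv {j : ℕ} (hj : 1 < j) (a : ℤ) :
    HasSum (fun k : ℤ => (((k : ℝ) + a) ^ j)⁻¹) (intZeta j) := by
  simpa using hasSum_int_sub_pow_inv hj (-a)

theorem hasSum_delta_sub_add_delta_add (a : ℤ) :
    HasSum (fun k : ℤ => delta ((k : ℝ) - a) + delta ((k : ℝ) + a)) 2 := by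
  rw [← one_add_one_eq_two]
  exact (hasSum_delta (i := a) fun k => by rw [sub_eq_zero, Int.cast_inj]).add
    (hasSum_delta (i := -a) fun k => by rw [← Int.cast_add, Int.cast_eq_zero]; omega)

/-- The closed form of `∑ (k² - a²)⁻¹` over all integers `k`. -/
noncomputable def sqSubSqSum₁ (a : ℝ) : ℝ := 1 / 2 * (a ^ 2)⁻¹ + π ^ 2 / 3 * delta a

/-- The closed form of `∑ (k² - a²)⁻²` over all integers `k`. -/
noncomputable def sqSubSqSum₂ (a : ℝ) : ℝ :=
  π ^ 2 / 6 * (a ^ 2)⁻¹ - 3 / 8 * (a ^ 4)⁻¹ + π ^ 4 / 45 * delta a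

/-- The closed form of `∑ (k² - a²)⁻³` over all integers `k`. -/
noncomputable def sqSubSqSum₃ (a : ℝ) : ℝ :=
  5 / 16 * (a ^ 6)⁻¹ - π ^ 2 / 8 * (a ^ 4)⁻¹ + 2 * π ^ 6 / 945 * delta a

theorem hasSum_sq_sub_sq_inv (a : ℤ) :
    HasSum (fun k : ℤ => ((k : ℝ) ^ 2 - a ^ 2)⁻¹) (sqSubSqSum₁ a) := by
  rcases eq_or_ne a 0 with rfl | ha
  · simpa [sqSubSqSum₁, delta_zero, intZeta_two] using hasSum_intZeta one_lt_two
  have ha' : (a : ℝ) ≠ 0 := by exact_mod_cast ha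
  convert! hasSum_inv_mul (x := fun k : ℤ => (k : ℝ) - a) (y := fun k : ℤ => (k : ℝ) + a)
    (d := 2 * a) (by positivity) (fun k => by ring) (hasSum_delta_sub_add_delta_add a)
    (by simpa using hasSum_int_inv_sub_inv a (-a)) using 1
  · funext k
    ring
  · rw [sqSubSqSum₁, delta_of_ne ha']
    ring

theorem hasSum_sq_sub_sq_sq_inv (a : ℤ) :
    HasSum (fun k : ℤ => (((k : ℝ) ^ 2 - a ^ 2) ^ 2)⁻¹) (sqSubSqSum₂ a) := by
  rcases eq_or_ne a 0 with rfl | ha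
  · simpa [sqSubSqSum₂, delta_zero, intZeta_four, ← pow_mul] using
      hasSum_intZeta (j := 4) (by norm_num)
  have ha' : (a : ℝ) ≠ 0 := by exact_mod_cast ha
  convert! hasSum_inv_mul_sq (x := fun k : ℤ => (k : ℝ) - a) (y := fun k : ℤ => (k : ℝ) + a)
    (d := 2 * a) (by positivity) (fun k => by ring) (hasSum_delta_sub_add_delta_add a)
    (by simpa using hasSum_int_inv_sub_inv a (-a))
    ((hasSum_int_sub_pow_inv one_lt_two a).add (hasSum_int_add_pow_inv one_lt_two a)) using 1
  · funext k
    ring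
  · rw [sqSubSqSum₂, delta_of_ne ha', intZeta_two]
    ring

theorem hasSum_sq_sub_sq_cube_inv (a : ℤ) :
    HasSum (fun k : ℤ => (((k : ℝ) ^ 2 - a ^ 2) ^ 3)⁻¹) (sqSubSqSum₃ a) := by
  rcases eq_or_ne a 0 with rfl | ha
  · simpa [sqSubSqSum₃, delta_zero, intZeta_six, ← pow_mul] using
      hasSum_intZeta (j := 6) (by norm_num)
  have ha' : (a : ℝ) ≠ 0 := by exact_mod_cast ha
  have h3 : 1 < 3 := by norm_num
  convert! hasSum_inv_mul_cube (x := fun k : ℤ => (k : ℝ) - a) (y := fun k : ℤ => (k : ℝ) + a)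
    (d := 2 * a) (by positivity) (fun k => by ring) (hasSum_delta_sub_add_delta_add a)
    (by simpa using hasSum_int_inv_sub_inv a (-a))
    ((hasSum_int_sub_pow_inv one_lt_two a).add (hasSum_int_add_pow_inv one_lt_two a))
    ((hasSum_int_sub_pow_inv h3 a).sub (hasSum_int_add_pow_inv h3 a)) using 1
  · funext k
    ring
  · rw [sqSubSqSum₃, delta_of_ne ha', intZeta_two]
    ring

theorem hasSum_delta_sq_sub_sq (a : ℤ) :
    HasSum (fun k : ℤ => delta ((k : ℝ) ^ 2 - a ^ 2)) (2 - delta a) := by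
  rcases eq_or_ne a 0 with rfl | ha
  · rw [Int.cast_zero, delta_zero, (by norm_num : (2 : ℝ) - 1 = 1)]
    exact hasSum_delta (i := 0) fun k => by simp
  have ha' : (a : ℝ) ≠ 0 := by exact_mod_cast ha
  rw [delta_of_ne ha', sub_zero]
  refine (hasSum_delta_sub_add_delta_add a).congr_fun fun k => ?_
  rw [sq_sub_sq]
  rcases eq_or_ne ((k : ℝ) - a) 0 with hk | hk
  · have hk' : (k : ℝ) + a ≠ 0 := by
      intro h
      exact ha' (by linarith)
    rw [hk, mul_zero, delta_zero, delta_of_ne hk', add_zero]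
  · simp [delta, hk]

/-! ### The sum over `k` -/

/-- The closed form of `∑ (a - b) / ((a² - b²) (k² - a²) (k² - b²))³` over all integers `k`, for
integers `a` and `b` with `a + b ≠ 0`. -/
noncomputable def innerSum (a b : ℝ) : ℝ :=
  (a - b) * ((a ^ 2 - b ^ 2) ^ 3)⁻¹ *
    (((a ^ 2 - b ^ 2) ^ 3)⁻¹ * (sqSubSqSum₃ a - sqSubSqSum₃ b)
      - 3 * ((a ^ 2 - b ^ 2) ^ 4)⁻¹ * (sqSubSqSum₂ a + sqSubSqSum₂ b)
      + 6 * ((a ^ 2 - b ^ 2) ^ 5)⁻¹ * (sqSubSqSum₁ a - sqSubSqSum₁ b)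
      + 10 * ((a ^ 2 - b ^ 2) ^ 6)⁻¹ * ((2 - delta a) + (2 - delta b)))

theorem hasSum_innerSum {a b : ℤ} (hab : a + b ≠ 0) :
    HasSum (fun k : ℤ => ((a : ℝ) - b) *
      ((((a : ℝ) ^ 2 - b ^ 2) * (k ^ 2 - a ^ 2) * (k ^ 2 - b ^ 2)) ^ 3)⁻¹) (innerSum a b) := by
  rcases eq_or_ne a b with rfl | hne
  · simp only [innerSum, sub_self, zero_mul, hasSum_zero]
  have hd : (a : ℝ) ^ 2 - b ^ 2 ≠ 0 := by
    rw [sq_sub_sq]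
    exact mul_ne_zero (by exact_mod_cast hab) (sub_ne_zero.mpr (by exact_mod_cast hne))
  refine ((hasSum_inv_mul_cube hd (fun k : ℤ => by ring)
    ((hasSum_delta_sq_sub_sq a).add (hasSum_delta_sq_sub_sq b))
    ((hasSum_sq_sub_sq_inv a).sub (hasSum_sq_sub_sq_inv b))
    ((hasSum_sq_sub_sq_sq_inv a).add (hasSum_sq_sub_sq_sq_inv b))
    ((hasSum_sq_sub_sq_cube_inv a).sub (hasSum_sq_sub_sq_cube_inv b))).mul_left _).congr_fun
    fun k => ?_
  rw [mul_assoc ((a : ℝ) ^ 2 - b ^ 2), mul_pow ((a : ℝ) ^ 2 - b ^ 2), mul_inv, mul_assoc]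

/-- The polar part of `innerSum a b` along `a = b`, as a function of `l = a + b` and
`n = a - b`. -/
noncomputable def diagonalPart (l n : ℝ) : ℝ :=
  40 * (l ^ 9)⁻¹ * (n ^ 8)⁻¹ - (12 * (l ^ 11)⁻¹ + 4 * π ^ 2 * (l ^ 9)⁻¹) * (n ^ 6)⁻¹
    + (24 * (l ^ 13)⁻¹ + 4 * π ^ 2 * (l ^ 11)⁻¹) * (n ^ 4)⁻¹
    - (1124 * (l ^ 15)⁻¹ - 60 * π ^ 2 * (l ^ 13)⁻¹) * (n ^ 2)⁻¹
    + (7248 * (l ^ 17)⁻¹ - 196 * π ^ 2 * (l ^ 15)⁻¹) * delta n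

/-- The polar part of `innerSum a b` along `a = 0` and `b = 0`, with coefficients in
`l = a + b`. -/
noncomputable def axialPart (l a b : ℝ) : ℝ :=
  -(5 / 16 * (l ^ 11)⁻¹ * ((a ^ 6)⁻¹ + (b ^ 6)⁻¹))
    - 25 / 8 * (l ^ 12)⁻¹ * ((a ^ 5)⁻¹ + (b ^ 5)⁻¹)
    - (141 / 8 * (l ^ 13)⁻¹ - π ^ 2 / 8 * (l ^ 11)⁻¹) * ((a ^ 4)⁻¹ + (b ^ 4)⁻¹)
    - (74 * (l ^ 14)⁻¹ - 5 / 4 * π ^ 2 * (l ^ 12)⁻¹) * ((a ^ 3)⁻¹ + (b ^ 3)⁻¹)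
    - (517 / 2 * (l ^ 15)⁻¹ - 7 * π ^ 2 * (l ^ 13)⁻¹) * ((a ^ 2)⁻¹ + (b ^ 2)⁻¹)
    - (798 * (l ^ 16)⁻¹ - 29 * π ^ 2 * (l ^ 14)⁻¹) * (a⁻¹ + b⁻¹)
    + (2258 * (l ^ 17)⁻¹ - 100 * π ^ 2 * (l ^ 15)⁻¹ - π ^ 4 / 15 * (l ^ 13)⁻¹
      - 2 * π ^ 6 / 945 * (l ^ 11)⁻¹) * (delta a + delta b)

theorem innerSum_eq {a b : ℝ} (hl : a + b ≠ 0) :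
    innerSum a b = diagonalPart (a + b) (a - b) + axialPart (a + b) a b := by
  unfold innerSum diagonalPart axialPart sqSubSqSum₁ sqSubSqSum₂ sqSubSqSum₃
  rcases eq_or_ne a b with rfl | hne
  · have ha : a ≠ 0 := fun h => hl (by rw [h, add_zero])
    rw [delta_of_ne ha, sub_self, delta_zero]
    field_simp
    ring
  have hn : a - b ≠ 0 := sub_ne_zero.mpr hne
  rcases eq_or_ne a 0 with rfl | ha
  · rw [zero_add] at hl
    rw [zero_add, delta_of_ne hl, delta_of_ne hn, delta_zero]
    field_simp
    ring
  rcases eq_or_ne b 0 with rfl | hb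
  · rw [delta_of_ne ha, delta_of_ne hn, delta_zero]
    field_simp
    ring
  have hd : a ^ 2 - b ^ 2 ≠ 0 := by
    rw [sq_sub_sq]
    exact mul_ne_zero hl hn
  rw [delta_of_ne ha, delta_of_ne hb, delta_of_ne hn]
  field_simp
  ring

/-! ### The sum over `a + b = l` -/

theorem hasSum_int_sub_add_pow_inv {j : ℕ} (hj : 1 < j) (l : ℤ) :
    HasSum (fun b : ℤ => (((l - b : ℤ) : ℝ) ^ j)⁻¹ + ((b : ℝ) ^ j)⁻¹) (2 * intZeta j) := by
  rw [two_mul]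
  exact ((Equiv.subLeft l).hasSum_iff.mpr (hasSum_intZeta hj)).add (hasSum_intZeta hj)

theorem hasSum_int_sub_add_inv (l : ℤ) :
    HasSum (fun b : ℤ => ((l - b : ℤ) : ℝ)⁻¹ + (b : ℝ)⁻¹) 0 := by
  refine (hasSum_int_inv_sub_inv 0 l).congr_fun fun b => ?_
  rw [sub_zero, ← neg_sub b l, Int.cast_neg, inv_neg]
  ring

theorem hasSum_delta_int_sub_add (l : ℤ) :
    HasSum (fun b : ℤ => delta ((l - b : ℤ) : ℝ) + delta (b : ℝ)) 2 := by
  rw [← one_add_one_eq_two]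
  exact (hasSum_delta (i := l) fun b => by rw [Int.cast_eq_zero]; omega).add
    (hasSum_delta (i := 0) fun b => Int.cast_eq_zero)

theorem hasSum_axialPart (l : ℤ) :
    HasSum (fun b : ℤ => axialPart l ((l - b : ℤ) : ℝ) b)
      (15 / 4 * π ^ 4 * ((l : ℝ) ^ 13)⁻¹ - 1117 / 3 * π ^ 2 * ((l : ℝ) ^ 15)⁻¹
        + 4516 * ((l : ℝ) ^ 17)⁻¹) := by
  have hpow {j : ℕ} (hj : 1 < j) (c : ℝ) := (hasSum_int_sub_add_pow_inv hj l).mul_left c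
  convert! (hpow (j := 6) (by norm_num) (5 / 16 * ((l : ℝ) ^ 11)⁻¹)).neg
    |>.sub (hpow (j := 5) (by norm_num) _)
    |>.sub (hpow (j := 4) (by norm_num) _)
    |>.sub (hpow (j := 3) (by norm_num) _)
    |>.sub (hpow (j := 2) (by norm_num) _)
    |>.sub ((hasSum_int_sub_add_inv l).mul_left _)
    |>.add ((hasSum_delta_int_sub_add l).mul_left _) using 1
  rw [intZeta_six, intZeta_of_odd (j := 5) (by decide), intZeta_four,
    intZeta_of_odd (j := 3) (by decide), intZeta_two]
  ring

theorem hasSum_int_two_mul_add_one {f : ℤ → ℝ} {s t : ℝ} (hf : HasSum f s)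
    (heven : HasSum (fun b => f (2 * b)) t) : HasSum (fun b => f (2 * b + 1)) (s - t) := by
  have heven' : HasSum (fun k => if Even k then f k else 0) t := by
    refine (Function.Injective.hasSum_iff (mul_right_injective₀ (two_ne_zero' ℤ))
      fun k hk => if_neg fun hk' => hk ?_).mp
      (heven.congr_fun fun b => if_pos (even_two_mul b))
    obtain ⟨c, rfl⟩ := hk'
    exact ⟨c, two_mul c⟩
  refine ((Function.Injective.hasSum_iff (g := fun b : ℤ => 2 * b + 1)
    (fun b c h => by simpa using h) fun k hk => ?_).mpr (hf.sub heven')).congr_fun fun b => ?_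
  · have hk' : Even k := by
      by_contra hodd
      obtain ⟨c, rfl⟩ := Int.not_even_iff_odd.mp hodd
      exact hk ⟨c, rfl⟩
    rw [if_pos hk', sub_self]
  · rw [Function.comp_apply, if_neg (Int.not_even_two_mul_add_one b), sub_zero]

theorem hasSum_int_sub_two_mul_pow_inv {j : ℕ} (hj : 1 < j) (l : ℤ) :
    HasSum (fun b : ℤ => (((l - 2 * b : ℤ) : ℝ) ^ j)⁻¹)
      ((if Even l then (2 ^ j)⁻¹ else 1 - (2 ^ j)⁻¹) * intZeta j) := by
  have heven : HasSum (fun b : ℤ => (((2 * b : ℤ) : ℝ) ^ j)⁻¹) ((2 ^ j)⁻¹ * intZeta j) :=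
    ((hasSum_intZeta hj).mul_left _).congr_fun fun b => by
      rw [Int.cast_mul, Int.cast_ofNat, mul_pow, mul_inv]
  have hodd := hasSum_int_two_mul_add_one (hasSum_intZeta hj) heven
  split_ifs with hl
  · obtain ⟨c, rfl⟩ := hl
    refine ((Equiv.subLeft c).hasSum_iff.mpr heven).congr_fun fun b => ?_
    rw [Function.comp_apply, Equiv.subLeft_apply, mul_sub, two_mul c]
  · obtain ⟨c, rfl⟩ := Int.not_even_iff_odd.mp hl
    rw [sub_mul, one_mul]
    refine ((Equiv.subLeft c).hasSum_iff.mpr hodd).congr_fun fun b => ?_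
    rw [Function.comp_apply, Equiv.subLeft_apply, mul_sub, sub_add_eq_add_sub]

theorem hasSum_delta_int_sub_two_mul (l : ℤ) :
    HasSum (fun b : ℤ => delta ((l - 2 * b : ℤ) : ℝ)) (if Even l then 1 else 0) := by
  split_ifs with hl
  · obtain ⟨c, rfl⟩ := hl
    exact hasSum_delta (i := c) fun b => by rw [Int.cast_eq_zero]; omega
  · refine hasSum_zero.congr_fun fun b => delta_of_ne ?_
    rw [Int.cast_ne_zero]
    exact fun h => hl ⟨b, by omega⟩

theorem hasSum_diagonalPart (l : ℤ) :
    HasSum (fun b : ℤ => diagonalPart l ((l - 2 * b : ℤ) : ℝ))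
      ((if Even l then -1 / 10080 else 1 / 10080) * π ^ 8 * ((l : ℝ) ^ 9)⁻¹
        + (if Even l then 13 / 2520 else 7 / 120) * π ^ 6 * ((l : ℝ) ^ 11)⁻¹
        + (if Even l then 151 / 30 else 31 / 2) * π ^ 4 * ((l : ℝ) ^ 13)⁻¹
        + (if Even l then -869 / 3 else -281) * π ^ 2 * ((l : ℝ) ^ 15)⁻¹
        + (if Even l then 7248 else 0) * ((l : ℝ) ^ 17)⁻¹) := by
  have hpow {j : ℕ} (hj : 1 < j) (c : ℝ) := (hasSum_int_sub_two_mul_pow_inv hj l).mul_left c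
  convert! hpow (j := 8) (by norm_num) (40 * ((l : ℝ) ^ 9)⁻¹)
    |>.sub (hpow (j := 6) (by norm_num) _)
    |>.add (hpow (j := 4) (by norm_num) _)
    |>.sub (hpow (j := 2) (by norm_num) _)
    |>.add ((hasSum_delta_int_sub_two_mul l).mul_left _) using 1
  rw [intZeta_eight, intZeta_six, intZeta_four, intZeta_two]
  split_ifs <;> ring

/-- The closed form of the sum of `innerSum (l - b) b` over all integers `b`, for an integer
`l ≠ 0`. -/
noncomputable def levelSum (l : ℤ) : ℝ :=
  (if Even l then -1 / 10080 else 1 / 10080) * π ^ 8 * ((l : ℝ) ^ 9)⁻¹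
    + (if Even l then 13 / 2520 else 7 / 120) * π ^ 6 * ((l : ℝ) ^ 11)⁻¹
    + (if Even l then 527 / 60 else 77 / 4) * π ^ 4 * ((l : ℝ) ^ 13)⁻¹
    + (if Even l then -662 else -1960 / 3) * π ^ 2 * ((l : ℝ) ^ 15)⁻¹
    + (if Even l then 11764 else 4516) * ((l : ℝ) ^ 17)⁻¹

theorem hasSum_levelSum {l : ℤ} (hl : l ≠ 0) :
    HasSum (fun b : ℤ => innerSum ((l - b : ℤ) : ℝ) b) (levelSum l) := by
  convert! (hasSum_diagonalPart l).add (hasSum_axialPart l) using 1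
  · funext b
    have hadd : ((l - b : ℤ) : ℝ) + b = l := by
      push_cast
      ring
    have hsub : ((l - b : ℤ) : ℝ) - b = (l - 2 * b : ℤ) := by
      push_cast
      ring
    rw [innerSum_eq (hadd ▸ Int.cast_ne_zero.mpr hl), hadd, hsub]
  · rw [levelSum]
    split_ifs <;> ring

/-! ### Weyl group symmetry -/

section WeylSymmetry

/-- Weighted sums over `ℤ³`: `∑ w a b k * P a b k` converges absolutely to `s`. -/
def HasWeightedSum (P : ℤ → ℤ → ℤ → ℝ) (w : ℤ → ℤ → ℤ → ℤ) (s : ℝ) : Prop :=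
  HasSum (fun x : ℤ × ℤ × ℤ => (w x.1 x.2.1 x.2.2 : ℝ) * P x.1 x.2.1 x.2.2) s

/-- Functions on `ℤ³` that are invariant under sign changes of the coordinates and alternating
under their permutations, i.e. that transform under the Weyl group of type `B₃` by the sign
character of `S₃`. Generators of the group suffice. -/
structure IsAlternating (P : ℤ → ℤ → ℤ → ℝ) : Prop where
  neg₁ : ∀ a b k, P (-a) b k = P a b k
  swap₁₂ : ∀ a b k, P b a k = -P a b k
  swap₂₃ : ∀ a b k, P a k b = -P a b k

variable {P : ℤ → ℤ → ℤ → ℝ} {w w' : ℤ → ℤ → ℤ → ℤ} {s s' : ℝ}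

namespace HasWeightedSum

theorem congr (h : HasWeightedSum P w s) (hw : ∀ a b k, P a b k = 0 ∨ w' a b k = w a b k) :
    HasWeightedSum P w' s :=
  h.congr_fun fun x => by rcases hw x.1 x.2.1 x.2.2 with h₀ | h₀ <;> simp only [h₀, mul_zero]

theorem unique (h : HasWeightedSum P w s) (h' : HasWeightedSum P w s') : s = s' :=
  HasSum.unique h h'

theorem add (h : HasWeightedSum P w s) (h' : HasWeightedSum P w' s') :
    HasWeightedSum P (fun a b k => w a b k + w' a b k) (s + s') :=
  (HasSum.add h h').congr_fun fun x => by push_cast; ring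

theorem sub (h : HasWeightedSum P w s) (h' : HasWeightedSum P w' s') :
    HasWeightedSum P (fun a b k => w a b k - w' a b k) (s - s') :=
  (HasSum.sub h h').congr_fun fun x => by push_cast; ring

theorem swap₁₂ (h : HasWeightedSum P w s) (hP : IsAlternating P) :
    HasWeightedSum P (fun a b k => w b a k) (-s) := by
  let e : ℤ × ℤ × ℤ ≃ ℤ × ℤ × ℤ :=
    ⟨fun x => (x.2.1, x.1, x.2.2), fun x => (x.2.1, x.1, x.2.2), fun _ => rfl, fun _ => rfl⟩
  refine (e.hasSum_iff.mpr h).neg.congr_fun fun x => ?_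
  simp only [e, Function.comp_apply, Equiv.coe_fn_mk, hP.swap₁₂ x.1 x.2.1, mul_neg, neg_neg]

theorem swap₂₃ (h : HasWeightedSum P w s) (hP : IsAlternating P) :
    HasWeightedSum P (fun a b k => w a k b) (-s) := by
  refine ((((Equiv.refl ℤ).prodCongr (Equiv.prodComm ℤ ℤ)).hasSum_iff).mpr h).neg.congr_fun
    fun x => ?_
  simp only [Function.comp_apply, Equiv.prodCongr_apply, Prod.map, Equiv.refl_apply,
    Equiv.prodComm_apply, Prod.fst_swap, Prod.snd_swap, hP.swap₂₃ x.1 x.2.1, mul_neg, neg_neg]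

theorem neg₁ (h : HasWeightedSum P w s) (hP : IsAlternating P) :
    HasWeightedSum P (fun a b k => w (-a) b k) s := by
  refine ((((Equiv.neg ℤ).prodCongr (Equiv.refl (ℤ × ℤ))).hasSum_iff).mpr h).congr_fun
    fun x => ?_
  simp only [Function.comp_apply, Equiv.prodCongr_apply, Prod.map, Equiv.refl_apply,
    Equiv.neg_apply, hP.neg₁]

theorem neg₂ (h : HasWeightedSum P w s) (hP : IsAlternating P) :
    HasWeightedSum P (fun a b k => w a (-b) k) s := by
  simpa only [neg_neg] using ((h.swap₁₂ hP).neg₁ hP).swap₁₂ hP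

theorem neg₃ (h : HasWeightedSum P w s) (hP : IsAlternating P) :
    HasWeightedSum P (fun a b k => w a b (-k)) s := by
  simpa only [neg_neg] using ((h.swap₂₃ hP).neg₂ hP).swap₂₃ hP

end HasWeightedSum

namespace IsAlternating

theorem eq_zero_of_natAbs_eq (hP : IsAlternating P) {a b k : ℤ} (h : k.natAbs = a.natAbs) :
    P a b k = 0 := by
  have hneg₃ (a b k : ℤ) : P a b (-k) = P a b k := by
    linarith [hP.swap₂₃ a b (-k), hP.swap₁₂ (-k) a b, hP.neg₁ k a b, hP.swap₁₂ k a b,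
      hP.swap₂₃ a b k]
  have hdiag : P a b a = 0 := by
    linarith [hP.swap₂₃ a b a, hP.swap₁₂ a a b]
  rcases Int.natAbs_eq_natAbs_iff.mp h with rfl | rfl
  · exact hdiag
  · rw [hneg₃, hdiag]

theorem exists_hasWeightedSum (hP : IsAlternating P)
    (hsum : Summable fun x : ℤ × ℤ × ℤ => (x.1 : ℝ) * P x.1 x.2.1 x.2.2)
    {C : ℕ} (hw : ∀ a b k, (w a b k).natAbs ≤ C * (a.natAbs + b.natAbs)) :
    ∃ s, HasWeightedSum P w s := by
  have hfst : HasWeightedSum P (fun a _ _ => a) _ := hsum.hasSum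
  have hbound := (hsum.norm.add (hfst.swap₁₂ hP).summable.norm).mul_left (C : ℝ)
  refine ⟨_, (Summable.of_norm_bounded hbound fun x => ?_).hasSum⟩
  simp only [norm_mul, ← add_mul, ← mul_assoc]
  refine mul_le_mul_of_nonneg_right ?_ (norm_nonneg _)
  simp only [Real.norm_eq_abs, ← Int.cast_abs, Int.abs_eq_natAbs]
  exact_mod_cast hw x.1 x.2.1 x.2.2

theorem hasWeightedSum_orbit (hP : IsAlternating P)
    (h : HasWeightedSum P (fun a b k => if b.natAbs < a ∧ a < k then a + b else 0) s) :
    HasWeightedSum P (fun a b k =>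
      if b.natAbs < a.natAbs ∧ a.natAbs < k.natAbs then 2 * a.natAbs else 0) (8 * s) := by
  have h₂ : HasWeightedSum P (fun a b k => if b.natAbs < a ∧ a < k then 2 * a else 0) (s + s) :=
    (h.add (h.neg₂ hP)).congr fun a b k => .inr (by split_ifs <;> omega)
  have h₁ : HasWeightedSum P
      (fun a b k => if b.natAbs < a.natAbs ∧ a.natAbs < k then 2 * a.natAbs else 0) _ :=
    (h₂.add (h₂.neg₁ hP)).congr fun a b k => .inr (by split_ifs <;> omega)
  convert! (h₁.add (h₁.neg₃ hP)).congr fun a b k => .inr _ using 1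
  · ring
  · split_ifs <;> omega

theorem hasWeightedSum_of_natAbs_lt (hP : IsAlternating P)
    (hsum : Summable fun x : ℤ × ℤ × ℤ => (x.1 : ℝ) * P x.1 x.2.1 x.2.2)
    (h : HasWeightedSum P (fun a b k =>
      if b.natAbs < a.natAbs ∧ a.natAbs < k.natAbs then 2 * a.natAbs else 0) s) :
    HasWeightedSum P (fun a b _ => if b.natAbs < a.natAbs then 2 * a.natAbs else 0) s := by
  obtain ⟨t, ht⟩ := hP.exists_hasWeightedSum hsum (C := 2)
    (w := fun a b k => if b.natAbs < a.natAbs ∧ k.natAbs < a.natAbs then 2 * a.natAbs else 0)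
    fun a b k => by split_ifs <;> omega
  have hanti : t = -t :=
    ht.unique ((ht.swap₂₃ hP).congr fun a b k => .inr (by simp only [and_comm]))
  obtain rfl : t = 0 := by linarith
  rw [← add_zero s]
  refine (h.add ht).congr fun a b k => ?_
  rcases eq_or_ne k.natAbs a.natAbs with hk | hk
  · exact .inl (hP.eq_zero_of_natAbs_eq hk)
  · exact .inr (by split_ifs <;> omega)

theorem hasWeightedSum_half_space (hP : IsAlternating P)
    (hsum : Summable fun x : ℤ × ℤ × ℤ => (x.1 : ℝ) * P x.1 x.2.1 x.2.2)
    (h : HasWeightedSum P (fun a b k => if b.natAbs < a ∧ a < k then a + b else 0) s) :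
    HasWeightedSum P (fun a b _ => if 0 < a + b then a - b else 0) (4 * s) := by
  obtain ⟨t, ht⟩ := hP.exists_hasWeightedSum hsum (C := 1)
    (w := fun a b _ => if 0 < a + b then a - b else 0)
    fun a b _ => by split_ifs <;> omega
  have ht₁ := ht.add (ht.neg₁ hP)
  have hu := hP.hasWeightedSum_of_natAbs_lt hsum (hP.hasWeightedSum_orbit h)
  have hflips : t + t + (t + t) = 8 * s - -(8 * s) :=
    (ht₁.add (ht₁.neg₂ hP)).unique ((hu.sub (hu.swap₁₂ hP)).congr fun a b k => .inr (by
      split_ifs <;> omega))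
  obtain rfl : t = 4 * s := by linarith
  exact ht

end IsAlternating

end WeylSymmetry

/-! ### The half-space sum -/

/-- The inverse cube of the Vandermonde product of `a²`, `b²`, `k²`. In the coordinates
`l = a + b`, `m = k - a`, `n = a - b` this product runs over the six linear forms
`l, m, n, l + m, m + n, l + m + n`. It is `0` on the hyperplanes where the product vanishes. -/
noncomputable def invVandermondeCube (a b k : ℤ) : ℝ :=
  ((((a : ℝ) ^ 2 - b ^ 2) * (k ^ 2 - a ^ 2) * (k ^ 2 - b ^ 2)) ^ 3)⁻¹

theorem isAlternating_invVandermondeCube : IsAlternating invVandermondeCube where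
  neg₁ a b k := by simp only [invVandermondeCube, Int.cast_neg, neg_sq]
  swap₁₂ a b k := by
    rw [invVandermondeCube, invVandermondeCube, ← inv_neg]
    congr 1
    ring
  swap₂₃ a b k := by
    rw [invVandermondeCube, invVandermondeCube, ← inv_neg]
    congr 1
    ring

theorem summable_int_prod_sq_inv : Summable fun x : ℤ × ℤ × ℤ =>
    ((x.1 : ℝ) ^ 2)⁻¹ * (((x.2.1 : ℝ) ^ 2)⁻¹ * ((x.2.2 : ℝ) ^ 2)⁻¹) := by
  have hsq := (hasSum_intZeta one_lt_two).summable
  have hpos : 0 ≤ fun n : ℤ => ((n : ℝ) ^ 2)⁻¹ := fun n => by positivity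
  exact hsq.mul_of_nonneg (hsq.mul_of_nonneg hsq hpos hpos) hpos fun x => by positivity

theorem abs_le_abs_add_mul_sub {a b : ℤ} (h : (a + b) * (a - b) ≠ 0) :
    |a| ≤ |(a + b) * (a - b)| := by
  have hadd := Int.one_le_abs (left_ne_zero_of_mul h)
  have hsub := Int.one_le_abs (right_ne_zero_of_mul h)
  have htri := abs_add_le (a + b) (a - b)
  rw [show a + b + (a - b) = 2 * a by ring, abs_mul, abs_two] at htri
  rw [abs_mul]
  nlinarith

theorem abs_mul_inv_mul_cube_le {a d e : ℤ} (h : d ≠ 0 → |a| ≤ |d|) :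
    |(a : ℝ) * (((d * e : ℤ) : ℝ) ^ 3)⁻¹| ≤ ((d : ℝ) ^ 2)⁻¹ := by
  rcases eq_or_ne (d * e) 0 with h₀ | h₀
  · simp only [h₀, Int.cast_zero, ne_eq, OfNat.ofNat_ne_zero, not_false_eq_true, zero_pow, inv_zero,
      mul_zero, abs_zero]
    positivity
  have hd : 0 < |(d : ℝ)| := abs_pos.mpr (Int.cast_ne_zero.mpr (left_ne_zero_of_mul h₀))
  have he : (1 : ℝ) ≤ |(e : ℝ)| := by exact_mod_cast Int.one_le_abs (right_ne_zero_of_mul h₀)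
  have ha : |(a : ℝ)| ≤ |(d : ℝ)| := by exact_mod_cast h (left_ne_zero_of_mul h₀)
  rw [Int.cast_mul, abs_mul, abs_inv, abs_pow, abs_mul, ← sq_abs (d : ℝ)]
  calc |(a : ℝ)| * ((|(d : ℝ)| * |(e : ℝ)|) ^ 3)⁻¹
      ≤ |(d : ℝ)| * ((|(d : ℝ)| * 1) ^ 3)⁻¹ := by gcongr
    _ = (|(d : ℝ)| ^ 2)⁻¹ := by
      field_simp

theorem summable_fst_mul_invVandermondeCube :
    Summable fun x : ℤ × ℤ × ℤ => (x.1 : ℝ) * invVandermondeCube x.1 x.2.1 x.2.2 := by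
  have hinj : Function.Injective
      fun x : ℤ × ℤ × ℤ => (x.2.2 - x.1, x.1 + x.2.1, x.1 - x.2.1) := by
    rintro ⟨a, b, k⟩ ⟨a', b', k'⟩ h
    simp only [Prod.mk.injEq] at h ⊢
    omega
  refine Summable.of_norm_bounded (summable_int_prod_sq_inv.comp_injective hinj) ?_
  rintro ⟨a, b, k⟩
  have hbound := abs_mul_inv_mul_cube_le (a := a) (d := (k - a) * ((a + b) * (a - b)))
    (e := (k + a) * ((k + b) * (k - b))) fun hd => by
      rw [abs_mul]
      exact (abs_le_abs_add_mul_sub (right_ne_zero_of_mul hd)).trans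
        (le_mul_of_one_le_left (abs_nonneg _) (Int.one_le_abs (left_ne_zero_of_mul hd)))
  convert! hbound using 1
  · rw [Real.norm_eq_abs, invVandermondeCube]
    push_cast
    congr 4
    ring
  · simp only [Function.comp_apply, Int.cast_mul, mul_pow, mul_inv]

theorem hasSum_prod_prod {α β γ : Type*} {f : α × β × γ → ℝ} {g : α → β → ℝ} {h : α → ℝ} {s : ℝ}
    (hf : HasSum f s) (hg : ∀ a b, HasSum (fun c => f (a, b, c)) (g a b))
    (hh : ∀ a, HasSum (g a) (h a)) : HasSum h s :=
  hf.prod_fiberwise fun a => by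
    have ha := (hf.summable.prod_factor a).hasSum
    rwa [(ha.prod_fiberwise (hg a)).unique (hh a)] at ha

theorem hasSum_nat_levelSum {s : ℝ} (h : HasWeightedSum invVandermondeCube
    (fun a b _ => if 0 < a + b then a - b else 0) s) :
    HasSum (fun n : ℕ => levelSum n) s := by
  let shear : ℤ × ℤ × ℤ ≃ ℤ × ℤ × ℤ :=
    ⟨fun x => (x.1 - x.2.1, x.2), fun x => (x.1 + x.2.1, x.2),
      fun x => by simp, fun x => by simp⟩
  have hint : HasSum (fun l : ℤ => if 0 < l then levelSum l else 0) s := by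
    refine hasSum_prod_prod (shear.hasSum_iff.mpr h)
      (g := fun l b => if 0 < l then innerSum ((l - b : ℤ) : ℝ) b else 0)
      (fun l b => ?_) fun l => ?_
    · simp only [Function.comp_apply, shear, Equiv.coe_fn_mk, sub_add_cancel]
      split_ifs with hl
      · rw [Int.cast_sub (l - b) b]
        exact hasSum_innerSum (by omega)
      · simp only [Int.cast_zero, zero_mul, hasSum_zero]
    · split_ifs with hl
      · exact hasSum_levelSum hl.ne'
      · exact hasSum_zero
  refine (((Nat.cast_injective (R := ℤ)).hasSum_iff fun l hl => if_neg fun hpos => ?_).mpr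
    hint).congr_fun fun n => ?_
  · exact hl ⟨l.toNat, by omega⟩
  · rcases n.eq_zero_or_pos with rfl | hn
    · simp [levelSum]
    · rw [Function.comp_apply, if_pos (by omega)]

theorem add_mul_invVandermondeCube {l m n : ℕ} {a b k : ℤ} (hl : a + b = (l + 1 : ℕ))
    (hm : k - a = (m + 1 : ℕ)) (hn : a - b = (n + 1 : ℕ)) :
    ((a + b : ℤ) : ℝ) * invVandermondeCube a b k =
      1 / (((l + 1 : ℕ) : ℝ) ^ 2 * ((m + 1 : ℕ) : ℝ) ^ 3 * ((n + 1 : ℕ) : ℝ) ^ 3 *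
        ((l + 1 + (m + 1) : ℕ) : ℝ) ^ 3 * ((m + 1 + (n + 1) : ℕ) : ℝ) ^ 3 *
        ((l + 1 + (m + 1) + (n + 1) : ℕ) : ℝ) ^ 3) := by
  have hfactor : (((a : ℝ) ^ 2 - b ^ 2) * (k ^ 2 - a ^ 2) * (k ^ 2 - b ^ 2)) ^ 3 =
      ((a + b : ℤ) : ℝ) * (((l + 1 : ℕ) : ℝ) ^ 2 * ((m + 1 : ℕ) : ℝ) ^ 3 *
        ((n + 1 : ℕ) : ℝ) ^ 3 * ((l + 1 + (m + 1) : ℕ) : ℝ) ^ 3 *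
        ((m + 1 + (n + 1) : ℕ) : ℝ) ^ 3 * ((l + 1 + (m + 1) + (n + 1) : ℕ) : ℝ) ^ 3) := by
    rw [Nat.cast_add (l + 1 + (m + 1)), Nat.cast_add (l + 1) (m + 1), Nat.cast_add (m + 1) (n + 1)]
    simp only [← Int.cast_natCast (R := ℝ), ← hl, ← hm, ← hn]
    push_cast
    ring
  rw [invVandermondeCube, hfactor, mul_inv, mul_inv_cancel_left₀, one_div]
  exact Int.cast_ne_zero.mpr (by omega)

theorem hasSum_of_hasWeightedSum_chamber {s : ℝ} (h : HasWeightedSum invVandermondeCube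
    (fun a b k => if b.natAbs < a ∧ a < k then a + b else 0) s) :
    HasSum (fun t : ℕ × ℕ × ℕ =>
      if (t.1 + 1) % 2 = (t.2.2 + 1) % 2 then
        (1 : ℂ) /
          (((t.1 + 1 : ℕ) : ℂ) ^ 2 * ((t.2.1 + 1 : ℕ) : ℂ) ^ 3 *
            ((t.2.2 + 1 : ℕ) : ℂ) ^ 3 * ((t.1 + 1 + (t.2.1 + 1) : ℕ) : ℂ) ^ 3 *
            ((t.2.1 + 1 + (t.2.2 + 1) : ℕ) : ℂ) ^ 3 *
            ((t.1 + 1 + (t.2.1 + 1) + (t.2.2 + 1) : ℕ) : ℂ) ^ 3)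
      else 0) s := by
  set f : ℤ × ℤ × ℤ → ℝ := fun x =>
    ((if x.2.1.natAbs < x.1 ∧ x.1 < x.2.2 then x.1 + x.2.1 else 0 : ℤ) : ℝ) *
      invVandermondeCube x.1 x.2.1 x.2.2
  have hsupp (x : Function.support fun x => (f x : ℂ)) :
      x.1.2.1.natAbs < x.1.1 ∧ x.1.1 < x.1.2.2 := by
    by_contra hx
    exact x.2 (by simp only [f, if_neg hx, Int.cast_zero, zero_mul, ofReal_zero])
  refine (hasSum_iff_hasSum_of_ne_zero_bij (fun x : Function.support fun x => (f x : ℂ) =>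
    ((x.1.1 + x.1.2.1 - 1).toNat, (x.1.2.2 - x.1.1 - 1).toNat, (x.1.1 - x.1.2.1 - 1).toNat))
    ?_ ?_ ?_).mpr (Complex.hasSum_ofReal.mpr h)
  · intro x y hxy
    have hx := hsupp x
    have hy := hsupp y
    simp only [Prod.mk.injEq] at hxy
    ext <;> omega
  · rintro ⟨l, m, n⟩ ht
    have hparity : (l + 1) % 2 = (n + 1) % 2 := by
      by_contra hne
      exact ht (if_neg hne)
    obtain ⟨a, ha⟩ : ∃ a : ℤ, 2 * a = l + n + 2 := ⟨(l + n + 2) / 2, by omega⟩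
    have hmem : f (a, l + 1 - a, a + m + 1) ≠ 0 := by
      simp only [f]
      rw [if_pos (by omega), add_mul_invVandermondeCube (l := l) (m := m) (n := n)
        (by omega) (by omega) (by omega)]
      positivity
    refine ⟨⟨(a, l + 1 - a, a + m + 1), ofReal_ne_zero.mpr hmem⟩, ?_⟩
    simp only [Prod.mk.injEq]
    omega
  · rintro ⟨⟨a, b, k⟩, hx⟩
    have hmem : b.natAbs < a ∧ a < k := hsupp ⟨_, hx⟩
    simp only [f]
    rw [if_pos (by omega), if_pos hmem, add_mul_invVandermondeCube (l := (a + b - 1).toNat)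
      (m := (k - a - 1).toNat) (n := (a - b - 1).toNat) (by omega) (by omega) (by omega)]
    push_cast
    rfl

/-! ### Zeta values -/

theorem hasSum_nat_pow_inv {j : ℕ} (hj : 1 < j) :
    HasSum (fun n : ℕ => ((n : ℂ) ^ j)⁻¹) (riemannZeta j) := by
  have h := (Complex.hasSum_ofReal.mpr (Real.summable_nat_pow_inv.mpr hj).hasSum).summable
  simp only [ofReal_inv, ofReal_pow, ofReal_natCast] at h
  simpa only [zeta_nat_eq_tsum_of_gt_one hj, one_div] using h.hasSum

theorem hasSum_ite_even_mul_nat_pow_inv {j : ℕ} (hj : 1 < j) (α β : ℝ) :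
    HasSum (fun n : ℕ => (((if Even n then α else β) * ((n : ℝ) ^ j)⁻¹ : ℝ) : ℂ))
      ((β + (α - β) * (2 ^ j)⁻¹) * riemannZeta j) := by
  have heven : HasSum (fun n : ℕ => if Even n then ((n : ℂ) ^ j)⁻¹ else 0)
      ((2 ^ j)⁻¹ * riemannZeta j) := by
    refine (Function.Injective.hasSum_iff (mul_right_injective₀ (two_ne_zero' ℕ))
      fun n hn => if_neg fun hn' => hn ?_).mp
      (((hasSum_nat_pow_inv hj).mul_left _).congr_fun fun n => ?_)
    · obtain ⟨c, rfl⟩ := hn'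
      exact ⟨c, two_mul c⟩
    · rw [Function.comp_apply, if_pos (even_two_mul n), Nat.cast_mul, Nat.cast_ofNat, mul_pow,
        mul_inv]
  rw [add_mul, mul_assoc]
  refine (((hasSum_nat_pow_inv hj).mul_left _).add (heven.mul_left _)).congr_fun fun n => ?_
  split_ifs <;> push_cast <;> ring

theorem hasSum_levelSum_riemannZeta : HasSum (fun n : ℕ => (levelSum n : ℂ))
    (4 * (17 * (π : ℂ) ^ 8 / 688128 * riemannZeta 9 +
      150461 * (π : ℂ) ^ 6 / 10321920 * riemannZeta 11 +
      2365283 * (π : ℂ) ^ 4 / 491520 * riemannZeta 13 -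
      32112653 * (π : ℂ) ^ 2 / 196608 * riemannZeta 15 +
      36995525 / 32768 * riemannZeta 17)) := by
  have hparity {j : ℕ} (hj : 1 < j) (α β : ℝ) (c : ℂ) :=
    (hasSum_ite_even_mul_nat_pow_inv hj α β).mul_left c
  convert! hparity (j := 9) (by norm_num) (-1 / 10080) (1 / 10080) (π ^ 8)
    |>.add (hparity (j := 11) (by norm_num) (13 / 2520) (7 / 120) (π ^ 6))
    |>.add (hparity (j := 13) (by norm_num) (527 / 60) (77 / 4) (π ^ 4))
    |>.add (hparity (j := 15) (by norm_num) (-662) (-1960 / 3) (π ^ 2))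
    |>.add (hparity (j := 17) (by norm_num) 11764 4516 1) using 1
  · funext n
    simp only [levelSum, Int.even_coe_nat]
    push_cast
    ring
  · push_cast
    ring

end SO6

/-- `ζ₃((2,3,3,3,3,3); SO(6))` evaluated in terms of Riemann zeta values
(Equation (6.5) of Komori–Matsumoto–Tsumura). -/
theorem SO6_value_233333 :
    (∑' t : ℕ × ℕ × ℕ,
        if (t.1 + 1) % 2 = (t.2.2 + 1) % 2 then
          (1 : ℂ) /
            (((t.1 + 1 : ℕ) : ℂ) ^ 2 * ((t.2.1 + 1 : ℕ) : ℂ) ^ 3 *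
              ((t.2.2 + 1 : ℕ) : ℂ) ^ 3 * ((t.1 + 1 + (t.2.1 + 1) : ℕ) : ℂ) ^ 3 *
              ((t.2.1 + 1 + (t.2.2 + 1) : ℕ) : ℂ) ^ 3 *
              ((t.1 + 1 + (t.2.1 + 1) + (t.2.2 + 1) : ℕ) : ℂ) ^ 3)
        else 0) =
      (17 * (π : ℂ) ^ 8 / 688128) * riemannZeta 9 +
        (150461 * (π : ℂ) ^ 6 / 10321920) * riemannZeta 11 +
        (2365283 * (π : ℂ) ^ 4 / 491520) * riemannZeta 13 -
        (32112653 * (π : ℂ) ^ 2 / 196608) * riemannZeta 15 +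
        (36995525 / 32768) * riemannZeta 17 := by
  have halt := SO6.isAlternating_invVandermondeCube
  have hsum := SO6.summable_fst_mul_invVandermondeCube
  obtain ⟨s, hs⟩ := halt.exists_hasWeightedSum hsum (C := 1)
    (w := fun a b k => if b.natAbs < a ∧ a < k then a + b else 0)
    fun a b k => by split_ifs <;> omega
  have hlevel := SO6.hasSum_nat_levelSum (halt.hasWeightedSum_half_space hsum hs)
  have hvalue := (Complex.hasSum_ofReal.mpr hlevel).unique SO6.hasSum_levelSum_riemannZeta
  rw [(SO6.hasSum_of_hasWeightedSum_chamber hs).tsum_eq]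
  push_cast at hvalue
  linear_combination hvalue / 4
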